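/- For each n, let a = √((3/7)n), let f : ℝ₊ → ℝ₊ be defined by f(x) = log a for 0 ≤ x ≤ a, f(x) = log x for a ≤ x ≤ 2a, and f(x) = √x − √(2a) + log(2a) for x ≥ 2a, and let N ≥ n^{5/2} log²n. Let X have density proportional to e^{-(n-1)f(|x|)} and let X̃ have density proportional to (1 − (n−1)f(|x|)/N)₊^N on ℝⁿ. Then: (i) ∫ x_i x_j dμ̃(x) = (1+ε'_n)δ_{ij} for all i,j with |ε'_n| ≤ C/√n; and (ii) for every t ∈ ℝ, |P(|X| ≤ t) − P(|X̃| ≤ t)| ≤ C/√n, where C > 0 is a universal constant. -/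

import Mathlib

open MeasureTheory Real

/-- The radial profile: `log a` on `[0,a]`, `log x` on `[a,2a]`,
`√x - √(2a) + log(2a)` on `[2a,∞)`. -/
noncomputable def radialF (a x : ℝ) : ℝ :=
  if x ≤ a then Real.log a
  else if x ≤ 2 * a then Real.log x
  else Real.sqrt x - Real.sqrt (2 * a) + Real.log (2 * a)

/-!
In polar coordinates both assertions concern the moments `∫₀^∞ r ^ m * w r dr` of the two radial
weights `w`: the distance between the laws of `|X|` and `|X̃|` is controlled by the quotient of
the moments of order `n - 1`, and by symmetry the covariance of `X̃` is a multiple of the identity,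
given by the quotient of its moments of orders `n + 1` and `n - 1`.

The profile `f` is chosen so that `r ^ (n - 1) * e^{-(n - 1) f(r)}` is identically `1` on the shell
`a ≤ r ≤ 2a` and contributes only a fraction `O(1/n)` outside it. With `g = (n - 1) f`, the
polynomial weight is at most `e^{-g}` everywhere, and at least `e^{-g} (1 - g ^ 2 / N)` by
Bernoulli's inequality; on the shell `g ≤ n log n`, so that `g ^ 2 / N ≤ 1 / √n`. Hence the moments
of both weights of orders `n - 1` and `n + 1` are `a` and `∫_a^{2a} r ^ 2 dr = n a`, up to a factor
`1 + O(1/√n)`. This needs `n` large; the finitely many remaining `n` only affect the constant `C`.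
-/

/-! ### Measures with a radial density -/

section Radial

variable {ι : Type*} [Fintype ι]

/-- The Euclidean norm of a vector of `ι → ℝ`, a type whose own norm is the sup norm. -/
noncomputable def euclideanNorm (x : ι → ℝ) : ℝ :=
  √(∑ i, x i ^ 2)

lemma euclideanNorm_eq_norm_toLp (x : ι → ℝ) : euclideanNorm x = ‖WithLp.toLp 2 x‖ := by
  simp [euclideanNorm, EuclideanSpace.norm_eq]

lemma euclideanNorm_sq (x : ι → ℝ) : euclideanNorm x ^ 2 = ∑ i, x i * x i := by
  rw [euclideanNorm, sq_sqrt (Finset.sum_nonneg fun i _ => sq_nonneg _)]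
  simp only [sq]

@[fun_prop]
lemma measurable_euclideanNorm : Measurable (euclideanNorm : (ι → ℝ) → ℝ) := by
  unfold euclideanNorm
  fun_prop

/-- The moment `∫₀^∞ r ^ m * w r dr`. In dimension `d`, the moment of order `m = d - 1 + k` is, up
to a constant depending only on `d`, the integral of `w(|x|) * |x| ^ k` over `ℝᵈ`. -/
noncomputable def radialMoment (w : ℝ → ℝ) (m : ℕ) : ℝ :=
  ∫ r in Set.Ioi 0, r ^ m * w r

lemma radialMoment_nonneg {w : ℝ → ℝ} (hw : ∀ r, 0 ≤ w r) (m : ℕ) : 0 ≤ radialMoment w m :=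
  setIntegral_nonneg measurableSet_Ioi fun r hr => mul_nonneg (pow_nonneg (le_of_lt hr) _) (hw r)

lemma radialMoment_mul_pow (w : ℝ → ℝ) (m k : ℕ) :
    radialMoment (fun r => w r * r ^ k) m = radialMoment w (m + k) := by
  simp only [radialMoment, pow_add, mul_right_comm, mul_assoc]

lemma integral_comp_euclideanNorm [Nonempty ι] (φ : ℝ → ℝ) :
    ∫ x : ι → ℝ, φ (euclideanNorm x) =
      Fintype.card ι * (volume : Measure (EuclideanSpace ℝ ι)).real (Metric.ball 0 1) *
        radialMoment φ (Fintype.card ι - 1) := by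
  simp only [euclideanNorm_eq_norm_toLp]
  rw [(PiLp.volume_preserving_toLp ι).integral_comp
    (MeasurableEquiv.toLp 2 _).measurableEmbedding fun x : EuclideanSpace ℝ ι => φ ‖x‖,
    integral_fun_norm_addHaar]
  simp [radialMoment, mul_assoc]

lemma integrable_comp_euclideanNorm [Nonempty ι] {φ : ℝ → ℝ}
    (hφ : IntegrableOn (fun r => r ^ (Fintype.card ι - 1) * φ r) (Set.Ioi 0)) :
    Integrable fun x : ι → ℝ => φ (euclideanNorm x) := by
  simp only [euclideanNorm_eq_norm_toLp]
  exact ((PiLp.volume_preserving_toLp ι).integrable_comp_emb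
    (MeasurableEquiv.toLp 2 _).measurableEmbedding).2
      ((integrable_fun_norm_addHaar (volume : Measure (EuclideanSpace ℝ ι))).2 (by simpa using hφ))

/-- `μ` is a probability measure whose density is proportional to `w(|x|)`, for a measurable
nonnegative weight `w`. -/
structure HasRadialDensity (w : ℝ → ℝ) (μ : Measure (ι → ℝ)) : Prop where
  measurable : Measurable w
  nonneg : ∀ r, 0 ≤ w r
  isProbabilityMeasure : IsProbabilityMeasure μ
  exists_eq_withDensity : ∃ c : ℝ, μ = volume.withDensity fun x =>
    ENNReal.ofReal (c * w (euclideanNorm x))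

namespace HasRadialDensity

variable {w : ℝ → ℝ} {μ : Measure (ι → ℝ)}

lemma exists_nonneg_eq_withDensity (hμ : HasRadialDensity w μ) :
    ∃ c : ℝ, 0 ≤ c ∧ μ = volume.withDensity fun x => ENNReal.ofReal (c * w (euclideanNorm x)) := by
  obtain ⟨c, hc⟩ := hμ.exists_eq_withDensity
  refine ⟨c, le_of_not_gt fun hc_neg => ?_, hc⟩
  have hzero : ∀ x : ι → ℝ, ENNReal.ofReal (c * w (euclideanNorm x)) = 0 := fun x =>
    ENNReal.ofReal_of_nonpos (mul_nonpos_of_nonpos_of_nonneg hc_neg.le (hμ.nonneg _))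
  have := hμ.isProbabilityMeasure
  exact IsProbabilityMeasure.ne_zero μ (by simp [hc, hzero])

lemma exists_integral_eq (hμ : HasRadialDensity w μ) :
    ∃ c : ℝ, ∀ φ : (ι → ℝ) → ℝ, ∫ x, φ x ∂μ = c * ∫ x, w (euclideanNorm x) * φ x := by
  obtain ⟨c, hc, rfl⟩ := hμ.exists_nonneg_eq_withDensity
  have := hμ.measurable
  refine ⟨c, fun φ => ?_⟩
  rw [integral_withDensity_eq_integral_toReal_smul (by fun_prop) (by simp), ← integral_const_mul]
  congr 1 with x
  rw [ENNReal.toReal_ofReal (mul_nonneg hc (hμ.nonneg _)), smul_eq_mul, mul_assoc]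

lemma integrable (hμ : HasRadialDensity w μ) {φ : (ι → ℝ) → ℝ}
    (hφ : Integrable fun x => w (euclideanNorm x) * φ x) : Integrable φ μ := by
  obtain ⟨c, hc, rfl⟩ := hμ.exists_nonneg_eq_withDensity
  have := hμ.measurable
  rw [integrable_withDensity_iff_integrable_smul' (by fun_prop) (by simp)]
  refine (hφ.const_mul c).congr (.of_forall fun x => ?_)
  simp only [smul_eq_mul, ENNReal.toReal_ofReal (mul_nonneg hc (hμ.nonneg _)), mul_assoc]

lemma integral_comp_linearIsometryEquiv (hμ : HasRadialDensity w μ)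
    (T : EuclideanSpace ℝ ι ≃ₗᵢ[ℝ] EuclideanSpace ℝ ι) (φ : EuclideanSpace ℝ ι → ℝ) :
    ∫ x, φ (T (WithLp.toLp 2 x)) ∂μ = ∫ x, φ (WithLp.toLp 2 x) ∂μ := by
  obtain ⟨c, hc⟩ := hμ.exists_integral_eq
  have toLp (ψ : EuclideanSpace ℝ ι → ℝ) : ∫ x : ι → ℝ, ψ (WithLp.toLp 2 x) = ∫ y, ψ y :=
    (PiLp.volume_preserving_toLp ι).integral_comp (MeasurableEquiv.toLp 2 _).measurableEmbedding ψ
  have hT := T.measurePreserving.integral_comp T.toHomeomorph.measurableEmbedding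
    fun y => w ‖y‖ * φ y
  simp only [T.norm_map] at hT
  simp only [hc, euclideanNorm_eq_norm_toLp]
  rw [toLp fun y => w ‖y‖ * φ (T y), toLp fun y => w ‖y‖ * φ y, hT]

lemma integral_mul_eq_zero (hμ : HasRadialDensity w μ) {i j : ι} (hij : i ≠ j) :
    ∫ x, x i * x j ∂μ = 0 := by
  classical
  let reflection : EuclideanSpace ℝ ι ≃ₗᵢ[ℝ] EuclideanSpace ℝ ι :=
    LinearIsometryEquiv.piLpCongrRight 2 fun k =>
      if k = i then LinearIsometryEquiv.neg ℝ else LinearIsometryEquiv.refl ℝ ℝ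
  have h := hμ.integral_comp_linearIsometryEquiv reflection fun y => y i * y j
  simp only [reflection, LinearIsometryEquiv.piLpCongrRight_apply, if_true, if_neg hij.symm,
    LinearIsometryEquiv.coe_neg, LinearIsometryEquiv.coe_refl, id_eq, neg_mul, integral_neg] at h
  linarith

lemma integral_mul_self_eq (hμ : HasRadialDensity w μ) (i j : ι) :
    ∫ x, x i * x i ∂μ = ∫ x, x j * x j ∂μ := by
  classical
  have h := hμ.integral_comp_linearIsometryEquiv
    (LinearIsometryEquiv.piLpCongrLeft 2 ℝ ℝ (Equiv.swap j i)) fun y => y i * y i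
  simpa [LinearIsometryEquiv.piLpCongrLeft_apply, Equiv.piCongrLeft'] using h.symm

variable [Nonempty ι]

lemma radialMoment_pos (hμ : HasRadialDensity w μ) : 0 < radialMoment w (Fintype.card ι - 1) := by
  obtain ⟨c, hc⟩ := hμ.exists_integral_eq
  have := hμ.isProbabilityMeasure
  refine (radialMoment_nonneg hμ.nonneg _).lt_of_ne' fun h => ?_
  simpa [integral_comp_euclideanNorm, h] using hc fun _ => 1

lemma integrableOn (hμ : HasRadialDensity w μ) :
    IntegrableOn (fun r => r ^ (Fintype.card ι - 1) * w r) (Set.Ioi 0) :=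
  Integrable.of_integral_ne_zero hμ.radialMoment_pos.ne'

lemma integral_comp_euclideanNorm (hμ : HasRadialDensity w μ) (φ : ℝ → ℝ) :
    ∫ x, φ (euclideanNorm x) ∂μ =
      radialMoment (fun r => w r * φ r) (Fintype.card ι - 1) /
        radialMoment w (Fintype.card ι - 1) := by
  obtain ⟨c, hc⟩ := hμ.exists_integral_eq
  have := hμ.isProbabilityMeasure
  have hmass := hc fun _ => 1
  simp only [integral_const, probReal_univ, smul_eq_mul, mul_one,
    _root_.integral_comp_euclideanNorm] at hmass
  rw [hc, _root_.integral_comp_euclideanNorm fun r => w r * φ r, eq_div_iff hμ.radialMoment_pos.ne']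
  linear_combination (-radialMoment (fun r => w r * φ r) (Fintype.card ι - 1)) * hmass

lemma measure_euclideanNorm_le (hμ : HasRadialDensity w μ) (t : ℝ) :
    (μ {x | euclideanNorm x ≤ t}).toReal =
      (∫ r in Set.Iic t, r ^ (Fintype.card ι - 1) * w r ∂volume.restrict (Set.Ioi 0)) /
        radialMoment w (Fintype.card ι - 1) := by
  have hset : MeasurableSet {x : ι → ℝ | euclideanNorm x ≤ t} :=
    measurableSet_le measurable_euclideanNorm measurable_const
  calc (μ {x | euclideanNorm x ≤ t}).toReal
      = ∫ x, (Set.Iic t).indicator 1 (euclideanNorm x) ∂μ := (integral_indicator_one hset).symm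
    _ = _ := by
      rw [hμ.integral_comp_euclideanNorm, radialMoment, ← integral_indicator measurableSet_Iic]
      simp only [Set.indicator_apply, Pi.one_apply, mul_ite, mul_one, mul_zero]

lemma integrable_mul_self (hμ : HasRadialDensity w μ)
    (hw : IntegrableOn (fun r => r ^ (Fintype.card ι - 1 + 2) * w r) (Set.Ioi 0)) (i : ι) :
    Integrable (fun x => x i * x i) μ := by
  have hsq : Integrable (fun x => euclideanNorm x ^ 2) μ :=
    hμ.integrable <| integrable_comp_euclideanNorm (φ := fun r => w r * r ^ 2) <| by
      simpa only [pow_add, mul_right_comm, mul_assoc] using hw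
  refine hsq.mono' (by fun_prop) (.of_forall fun x => ?_)
  rw [norm_of_nonneg (mul_self_nonneg _), euclideanNorm_sq]
  exact Finset.single_le_sum (f := fun i => x i * x i) (fun i _ => mul_self_nonneg _)
    (Finset.mem_univ i)

lemma integral_mul [DecidableEq ι] (hμ : HasRadialDensity w μ)
    (hw : IntegrableOn (fun r => r ^ (Fintype.card ι - 1 + 2) * w r) (Set.Ioi 0)) (i j : ι) :
    ∫ x, x i * x j ∂μ = radialMoment w (Fintype.card ι - 1 + 2) /
      (Fintype.card ι * radialMoment w (Fintype.card ι - 1)) * if i = j then 1 else 0 := by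
  rcases ne_or_eq i j with hij | rfl
  · rw [hμ.integral_mul_eq_zero hij, if_neg hij, mul_zero]
  have htrace : ∫ x, euclideanNorm x ^ 2 ∂μ = Fintype.card ι * ∫ x, x i * x i ∂μ := by
    simp only [euclideanNorm_sq]
    rw [integral_finsetSum _ fun k _ => hμ.integrable_mul_self hw k,
      Finset.sum_congr rfl fun k _ => hμ.integral_mul_self_eq k i]
    simp
  rw [hμ.integral_comp_euclideanNorm (· ^ 2), radialMoment_mul_pow] at htrace
  rw [if_pos rfl, mul_one, mul_comm (Fintype.card ι : ℝ), ← div_div, htrace]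
  field_simp

end HasRadialDensity

end Radial

lemma abs_setIntegral_div_integral_sub_le {α : Type*} [MeasurableSpace α] {ρ : Measure α}
    {p q : α → ℝ} (hp : Integrable p ρ) (hq : Integrable q ρ) (hq_nonneg : 0 ≤ᵐ[ρ] q)
    (hqp : q ≤ᵐ[ρ] p) (hq_pos : 0 < ∫ x, q x ∂ρ) (s : Set α) :
    |(∫ x in s, p x ∂ρ) / ∫ x, p x ∂ρ - (∫ x in s, q x ∂ρ) / ∫ x, q x ∂ρ| ≤
      1 - (∫ x, q x ∂ρ) / ∫ x, p x ∂ρ := by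
  have hs_nonneg : 0 ≤ ∫ x in s, q x ∂ρ := integral_nonneg_of_ae (ae_restrict_of_ae hq_nonneg)
  have hs_mono : ∫ x in s, q x ∂ρ ≤ ∫ x in s, p x ∂ρ :=
    integral_mono_ae hq.integrableOn hp.integrableOn (ae_restrict_of_ae hqp)
  have hs_le : ∫ x in s, q x ∂ρ ≤ ∫ x, q x ∂ρ := setIntegral_le_integral hq hq_nonneg
  have hs_sub : (∫ x in s, p x ∂ρ) - ∫ x in s, q x ∂ρ ≤ (∫ x, p x ∂ρ) - ∫ x, q x ∂ρ := by
    rw [← integral_sub hp hq, ← integral_sub hp.integrableOn hq.integrableOn]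
    exact setIntegral_le_integral (hp.sub hq) (hqp.mono fun x hx => sub_nonneg.2 hx)
  have hp_pos : 0 < ∫ x, p x ∂ρ := hq_pos.trans_le (integral_mono_ae hq hp hqp)
  have hs_ratio : (∫ x in s, q x ∂ρ) / ∫ x, q x ∂ρ ≤ 1 := (div_le_one hq_pos).2 hs_le
  have hdefect : 0 ≤ 1 - (∫ x, q x ∂ρ) / ∫ x, p x ∂ρ := by
    rw [sub_nonneg, div_le_one hp_pos]
    exact integral_mono_ae hq hp hqp
  have hsplit : (∫ x in s, p x ∂ρ) / (∫ x, p x ∂ρ) - (∫ x in s, q x ∂ρ) / ∫ x, q x ∂ρ =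
      ((∫ x in s, p x ∂ρ) - ∫ x in s, q x ∂ρ) / (∫ x, p x ∂ρ) -
        (∫ x in s, q x ∂ρ) / (∫ x, q x ∂ρ) * (1 - (∫ x, q x ∂ρ) / ∫ x, p x ∂ρ) := by
    field_simp
    ring
  rw [hsplit]
  refine abs_sub_le_of_nonneg_of_le (div_nonneg (sub_nonneg.2 hs_mono) hp_pos.le) ?_
    (mul_nonneg (div_nonneg hs_nonneg hq_pos.le) hdefect) (mul_le_of_le_one_left hdefect hs_ratio)
  rw [one_sub_div hp_pos.ne']
  gcongr

lemma HasRadialDensity.abs_measure_euclideanNorm_le_sub_le {ι : Type*} [Fintype ι] [Nonempty ι]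
    {v w : ℝ → ℝ} {μ ν : Measure (ι → ℝ)} (hμ : HasRadialDensity w μ) (hν : HasRadialDensity v ν)
    (hvw : ∀ r, v r ≤ w r) (t : ℝ) :
    |(μ {x | euclideanNorm x ≤ t}).toReal - (ν {x | euclideanNorm x ≤ t}).toReal| ≤
      1 - radialMoment v (Fintype.card ι - 1) / radialMoment w (Fintype.card ι - 1) := by
  rw [hμ.measure_euclideanNorm_le, hν.measure_euclideanNorm_le]
  refine abs_setIntegral_div_integral_sub_le hμ.integrableOn hν.integrableOn ?_ ?_
    hν.radialMoment_pos _ <;> filter_upwards [ae_restrict_mem measurableSet_Ioi] with r hr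
  · exact mul_nonneg (pow_nonneg (le_of_lt hr) _) (hν.nonneg r)
  · exact mul_le_mul_of_nonneg_left (hvw r) (pow_nonneg (le_of_lt hr) _)

/-! ### The exponential and polynomial weights -/

lemma max_one_sub_div_rpow_le_exp_neg (g : ℝ) {N : ℝ} (hN : 0 < N) :
    (max (1 - g / N) 0) ^ N ≤ exp (-g) := by
  have hbase : max (1 - g / N) 0 ≤ exp (-(g / N)) :=
    max_le (one_sub_le_exp_neg _) (exp_pos _).le
  calc (max (1 - g / N) 0) ^ N
      ≤ exp (-(g / N)) ^ N := rpow_le_rpow (le_max_right _ _) hbase hN.le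
    _ = exp (-g) := by rw [← exp_mul, neg_mul, div_mul_cancel₀ _ hN.ne']

lemma exp_neg_mul_one_sub_sq_le {u : ℝ} (hu : u ≤ 1) : exp (-u) * (1 - u ^ 2) ≤ 1 - u := by
  have h : exp (-u) * (1 + u) ≤ 1 := by
    calc exp (-u) * (1 + u) ≤ exp (-u) * exp u := by
          gcongr
          linarith [add_one_le_exp u]
      _ = 1 := by rw [← exp_add, neg_add_cancel, exp_zero]
  calc exp (-u) * (1 - u ^ 2) = exp (-u) * (1 + u) * (1 - u) := by ring
    _ ≤ 1 * (1 - u) := by gcongr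
    _ = 1 - u := one_mul _

lemma exp_neg_mul_one_sub_sq_div_le (g : ℝ) {N : ℝ} (hN : 1 ≤ N) :
    exp (-g) * (1 - g ^ 2 / N) ≤ (max (1 - g / N) 0) ^ N := by
  have hN0 : 0 < N := zero_lt_one.trans_le hN
  obtain ⟨u, rfl⟩ : ∃ u, g = u * N := ⟨g / N, (div_mul_cancel₀ g hN0.ne').symm⟩
  have hsq : (u * N) ^ 2 / N = N * u ^ 2 := by field_simp
  rw [hsq, mul_div_cancel_right₀ _ hN0.ne']
  rcases le_total (u ^ 2) 1 with hu | hu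
  · have hu_le : u ≤ 1 := (abs_le.1 (sq_le_one_iff_abs_le_one u |>.1 hu)).2
    have hbernoulli : 1 - N * u ^ 2 ≤ (1 - u ^ 2) ^ N := by
      have h := one_add_mul_self_le_rpow_one_add (s := -u ^ 2) (by linarith) hN
      rwa [mul_neg, ← sub_eq_add_neg, ← sub_eq_add_neg] at h
    calc exp (-(u * N)) * (1 - N * u ^ 2)
        ≤ exp (-u) ^ N * (1 - u ^ 2) ^ N := by
          rw [← exp_mul, neg_mul]
          gcongr
      _ = (exp (-u) * (1 - u ^ 2)) ^ N := (mul_rpow (exp_pos _).le (sub_nonneg.2 hu)).symm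
      _ ≤ (max (1 - u) 0) ^ N :=
          rpow_le_rpow (mul_nonneg (exp_pos _).le (sub_nonneg.2 hu))
            ((exp_neg_mul_one_sub_sq_le hu_le).trans (le_max_left _ _)) hN0.le
  · exact (mul_nonpos_of_nonneg_of_nonpos (exp_pos _).le (by nlinarith)).trans
      (rpow_nonneg (le_max_right _ _) _)

@[fun_prop]
lemma measurable_radialF (a : ℝ) : Measurable (radialF a) :=
  Measurable.ite measurableSet_Iic (by fun_prop)
    (Measurable.ite measurableSet_Iic (by fun_prop) (by fun_prop))

/-- The weight `e^{-s f}` for the profile `f = radialF a`. -/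
noncomputable def expWeight (a s r : ℝ) : ℝ :=
  exp (-s * radialF a r)

/-- The truncated polynomial approximation `(1 - s f / N)₊ ^ N` of `e^{-s f}` for the profile
`f = radialF a`. -/
noncomputable def polyWeight (a s N r : ℝ) : ℝ :=
  (max (1 - s * radialF a r / N) 0) ^ N

@[fun_prop]
lemma measurable_expWeight (a s : ℝ) : Measurable (expWeight a s) := by
  unfold expWeight
  fun_prop

@[fun_prop]
lemma measurable_polyWeight (a s N : ℝ) : Measurable (polyWeight a s N) := by
  unfold polyWeight
  fun_prop

lemma expWeight_nonneg (a s r : ℝ) : 0 ≤ expWeight a s r :=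
  (exp_pos _).le

lemma polyWeight_nonneg (a s N r : ℝ) : 0 ≤ polyWeight a s N r :=
  rpow_nonneg (le_max_right _ _) _

lemma polyWeight_le_expWeight (a s r : ℝ) {N : ℝ} (hN : 0 < N) :
    polyWeight a s N r ≤ expWeight a s r := by
  rw [expWeight, neg_mul]
  exact max_one_sub_div_rpow_le_exp_neg _ hN

lemma radialF_of_le {a r : ℝ} (hr : r ≤ a) : radialF a r = log a :=
  if_pos hr

lemma radialF_of_mem_Ioc {a r : ℝ} (hr : r ∈ Set.Ioc a (2 * a)) : radialF a r = log r := by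
  rw [radialF, if_neg hr.1.not_ge, if_pos hr.2]

lemma radialF_of_two_mul_lt {a r : ℝ} (ha : 0 < a) (hr : 2 * a < r) :
    radialF a r = √r - √(2 * a) + log (2 * a) := by
  rw [radialF, if_neg (by linarith), if_neg (by linarith)]

lemma exp_neg_natCast_mul_log (d : ℕ) {y : ℝ} (hy : 0 < y) : exp (-d * log y) = (y ^ d)⁻¹ := by
  rw [neg_mul, exp_neg, mul_comm, exp_mul, exp_log hy, rpow_natCast]

lemma pow_mul_expWeight_of_le {a r : ℝ} (d : ℕ) (ha : 0 < a) (hr : r ≤ a) :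
    r ^ d * expWeight a d r = r ^ d / a ^ d := by
  rw [expWeight, radialF_of_le hr, exp_neg_natCast_mul_log d ha, div_eq_mul_inv]

lemma pow_mul_expWeight_of_mem_Ioc {a r : ℝ} (d : ℕ) (ha : 0 < a) (hr : r ∈ Set.Ioc a (2 * a)) :
    r ^ d * expWeight a d r = 1 := by
  have hr0 : 0 < r := ha.trans hr.1
  rw [expWeight, radialF_of_mem_Ioc hr, exp_neg_natCast_mul_log d hr0,
    mul_inv_cancel₀ (pow_pos hr0 d).ne']

lemma one_sub_le_pow_mul_polyWeight {a r N : ℝ} (d : ℕ) (ha : 0 < a)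
    (hr : r ∈ Set.Ioc a (2 * a)) (hN : 1 ≤ N) :
    1 - (d * log r) ^ 2 / N ≤ r ^ d * polyWeight a d N r := by
  have hr0 : 0 < r := ha.trans hr.1
  calc 1 - (d * log r) ^ 2 / N
      = r ^ d * expWeight a d r * (1 - (d * radialF a r) ^ 2 / N) := by
        rw [pow_mul_expWeight_of_mem_Ioc d ha hr, one_mul, radialF_of_mem_Ioc hr]
    _ = r ^ d * (exp (-(d * radialF a r)) * (1 - (d * radialF a r) ^ 2 / N)) := by
        rw [expWeight, neg_mul, mul_assoc]
    _ ≤ r ^ d * polyWeight a d N r := by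
        gcongr
        exact exp_neg_mul_one_sub_sq_div_le _ hN

-- Concavity of the logarithm, after writing `log x = 2 * log √x`.
lemma sqrt_mul_log_sub_log_le {c r : ℝ} (hc : 0 < c) (hr : 0 < r) :
    √c * (log r - log c) ≤ 2 * (√r - √c) := by
  have h := log_le_sub_one_of_pos (div_pos (sqrt_pos.2 hr) (sqrt_pos.2 hc))
  rw [log_div (sqrt_pos.2 hr).ne' (sqrt_pos.2 hc).ne', log_sqrt hr.le, log_sqrt hc.le] at h
  calc √c * (log r - log c) = 2 * (√c * (log r / 2 - log c / 2)) := by ring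
    _ ≤ 2 * (√c * (√r / √c - 1)) := by gcongr
    _ = 2 * (√r - √c) := by field_simp

lemma two_mul_log_sub_log_le_radialF {a r : ℝ} (ha : 8 ≤ a) (hr : 2 * a < r) :
    2 * log r - log (2 * a) ≤ radialF a r := by
  have hsqrt : 4 ≤ √(2 * a) := le_sqrt_of_sq_le (by linarith)
  have hlog : log (2 * a) ≤ log r := log_le_log (by linarith) hr.le
  have h := sqrt_mul_log_sub_log_le (c := 2 * a) (r := r) (by linarith) (by linarith)
  rw [radialF_of_two_mul_lt (by linarith) hr]
  nlinarith

lemma pow_mul_expWeight_le_of_two_mul_lt {a r : ℝ} (d : ℕ) (ha : 8 ≤ a) (hr : 2 * a < r) :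
    r ^ d * expWeight a d r ≤ (2 * a) ^ d / r ^ d := by
  have hr0 : 0 < r := by linarith
  calc r ^ d * expWeight a d r
      ≤ r ^ d * exp (-d * (2 * log r - log (2 * a))) := by
        rw [expWeight, neg_mul, neg_mul]
        gcongr
        exact two_mul_log_sub_log_le_radialF ha hr
    _ = r ^ d * (exp (-d * log r) * exp (-d * log r) / exp (-d * log (2 * a))) := by
        rw [← exp_add, ← exp_sub]
        ring_nf
    _ = (2 * a) ^ d / r ^ d := by
        rw [exp_neg_natCast_mul_log d hr0, exp_neg_natCast_mul_log d (by linarith)]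
        field_simp

lemma sqrt_add_le_radialF {a : ℝ} (ha : 0 < a) (r : ℝ) :
    √r + (log a - √(2 * a)) ≤ radialF a r := by
  have hlog : log a ≤ log (2 * a) := log_le_log ha (by linarith)
  rcases le_or_gt r (2 * a) with hr | hr
  · have hsqrt : √r ≤ √(2 * a) := sqrt_le_sqrt hr
    rcases le_or_gt r a with hra | hra
    · rw [radialF_of_le hra]
      linarith
    · rw [radialF_of_mem_Ioc ⟨hra, hr⟩]
      linarith [log_le_log ha hra.le]
  · rw [radialF_of_two_mul_lt ha hr]
    linarith

lemma integrableOn_pow_mul_exp_neg_mul_sqrt {s : ℝ} (hs : 0 < s) (m : ℕ) :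
    IntegrableOn (fun r => r ^ m * exp (-s * √r)) (Set.Ioi 0) := by
  have h := integral_rpow_mul_exp_neg_mul_rpow (p := 1 / 2) (q := m) (b := s) (by norm_num)
    (by linarith [m.cast_nonneg (α := ℝ)]) hs
  simp only [rpow_natCast, ← sqrt_eq_rpow] at h
  refine Integrable.of_integral_ne_zero ?_
  rw [h]
  have := Gamma_pos_of_pos (s := (m + 1) / (1 / 2)) (by positivity)
  positivity

lemma integrableOn_pow_mul_expWeight {a s : ℝ} (ha : 0 < a) (hs : 0 < s) (m : ℕ) :
    IntegrableOn (fun r => r ^ m * expWeight a s r) (Set.Ioi 0) := by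
  refine ((integrableOn_pow_mul_exp_neg_mul_sqrt hs m).const_mul
    (exp (-s * (log a - √(2 * a))))).mono' (by fun_prop) ?_
  filter_upwards [ae_restrict_mem measurableSet_Ioi] with r hr
  have hr0 : 0 ≤ r := le_of_lt hr
  have hexp : expWeight a s r ≤ exp (-s * (log a - √(2 * a))) * exp (-s * √r) := by
    rw [← exp_add, ← mul_add, add_comm, expWeight, neg_mul, neg_mul]
    gcongr
    exact sqrt_add_le_radialF ha r
  rw [norm_of_nonneg (mul_nonneg (pow_nonneg hr0 _) (expWeight_nonneg _ _ _)), mul_left_comm]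
  gcongr

lemma integrableOn_pow_mul_polyWeight {a s N : ℝ} (ha : 0 < a) (hs : 0 < s) (hN : 0 < N) (m : ℕ) :
    IntegrableOn (fun r => r ^ m * polyWeight a s N r) (Set.Ioi 0) := by
  refine (integrableOn_pow_mul_expWeight ha hs m).mono' (by fun_prop) ?_
  filter_upwards [ae_restrict_mem measurableSet_Ioi] with r hr
  have hr0 : 0 ≤ r := le_of_lt hr
  rw [norm_of_nonneg (mul_nonneg (pow_nonneg hr0 _) (polyWeight_nonneg _ _ _ _))]
  gcongr
  exact polyWeight_le_expWeight a s r hN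

lemma radialMoment_polyWeight_le {a s N : ℝ} (ha : 0 < a) (hs : 0 < s) (hN : 0 < N) (m : ℕ) :
    radialMoment (polyWeight a s N) m ≤ radialMoment (expWeight a s) m :=
  setIntegral_mono_on (integrableOn_pow_mul_polyWeight ha hs hN m)
    (integrableOn_pow_mul_expWeight ha hs m) measurableSet_Ioi fun r hr =>
      mul_le_mul_of_nonneg_left (polyWeight_le_expWeight a s r hN) (pow_nonneg (le_of_lt hr) _)

lemma mul_le_radialMoment {w : ℝ → ℝ} {a b c : ℝ} {d k : ℕ} (ha : 0 ≤ a) (hab : a ≤ b)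
    (hw_nonneg : ∀ r, 0 ≤ w r) (hw : IntegrableOn (fun r => r ^ (d + k) * w r) (Set.Ioi 0))
    (hc : ∀ r ∈ Set.Ioc a b, c ≤ r ^ d * w r) :
    c * ((b ^ (k + 1) - a ^ (k + 1)) / (k + 1)) ≤ radialMoment w (d + k) := by
  have hsub : Set.Ioc a b ⊆ Set.Ioi 0 := fun r hr => ha.trans_lt hr.1
  calc c * ((b ^ (k + 1) - a ^ (k + 1)) / (k + 1))
      = ∫ r in Set.Ioc a b, c * r ^ k := by
        rw [integral_const_mul, ← intervalIntegral.integral_of_le hab, integral_pow]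
    _ ≤ ∫ r in Set.Ioc a b, r ^ (d + k) * w r := by
        refine setIntegral_mono_on (Continuous.integrableOn_Ioc (by fun_prop)) (hw.mono_set hsub)
          measurableSet_Ioc fun r hr => ?_
        rw [pow_add, mul_right_comm]
        exact mul_le_mul_of_nonneg_right (hc r hr) (pow_nonneg (le_of_lt (hsub hr)) _)
    _ ≤ radialMoment w (d + k) := by
        refine setIntegral_mono_set hw ?_ hsub.eventuallyLE
        filter_upwards [ae_restrict_mem measurableSet_Ioi] with r hr
        exact mul_nonneg (pow_nonneg (le_of_lt hr) _) (hw_nonneg r)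

lemma setIntegral_Ioc_zero_pow_mul_expWeight {a : ℝ} (ha : 0 < a) (d k : ℕ) :
    ∫ r in Set.Ioc 0 a, r ^ (d + k) * expWeight a d r = a ^ (k + 1) / (d + k + 1) := by
  have hcongr : ∫ r in Set.Ioc 0 a, r ^ (d + k) * expWeight a d r =
      ∫ r in Set.Ioc 0 a, r ^ (d + k) / a ^ d :=
    setIntegral_congr_fun measurableSet_Ioc fun r hr => by
      simp only [pow_add, mul_right_comm _ (r ^ k), pow_mul_expWeight_of_le d ha hr.2]
      ring
  rw [hcongr, ← intervalIntegral.integral_of_le ha.le, intervalIntegral.integral_div, integral_pow,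
    zero_pow (by omega), sub_zero, add_assoc d, pow_add]
  push_cast
  field_simp

lemma setIntegral_Ioc_pow_mul_expWeight {a : ℝ} (ha : 0 < a) (d k : ℕ) :
    ∫ r in Set.Ioc a (2 * a), r ^ (d + k) * expWeight a d r =
      ((2 * a) ^ (k + 1) - a ^ (k + 1)) / (k + 1) := by
  have hcongr : ∫ r in Set.Ioc a (2 * a), r ^ (d + k) * expWeight a d r =
      ∫ r in Set.Ioc a (2 * a), r ^ k :=
    setIntegral_congr_fun measurableSet_Ioc fun r hr => by
      simp only [pow_add, mul_right_comm _ (r ^ k), pow_mul_expWeight_of_mem_Ioc d ha hr, one_mul]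
  rw [hcongr, ← intervalIntegral.integral_of_le (by linarith), integral_pow]

lemma setIntegral_Ioi_pow_mul_expWeight_le {a : ℝ} (ha : 8 ≤ a) {d k : ℕ} (hdk : k + 1 < d) :
    ∫ r in Set.Ioi (2 * a), r ^ (d + k) * expWeight a d r ≤
      (2 * a) ^ (k + 1) / (d - (k + 1)) := by
  have hc : 0 < 2 * a := by linarith
  have hdk' : (k : ℝ) + 1 < d := by exact_mod_cast hdk
  have hexp : (k : ℝ) - d < -1 := by linarith
  have hd : (0 : ℝ) < d := by linarith [k.cast_nonneg (α := ℝ)]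
  calc ∫ r in Set.Ioi (2 * a), r ^ (d + k) * expWeight a d r
      ≤ ∫ r in Set.Ioi (2 * a), (2 * a) ^ d * r ^ ((k : ℝ) - d) := by
        refine setIntegral_mono_on
          ((integrableOn_pow_mul_expWeight (by linarith) hd _).mono_set
            (Set.Ioi_subset_Ioi hc.le))
          ((integrableOn_Ioi_rpow_of_lt hexp hc).const_mul _) measurableSet_Ioi fun r hr => ?_
        have hr0 : 0 < r := hc.trans hr
        calc r ^ (d + k) * expWeight a d r = r ^ d * expWeight a d r * r ^ k := by ring
          _ ≤ (2 * a) ^ d / r ^ d * r ^ k := by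
              gcongr
              exact pow_mul_expWeight_le_of_two_mul_lt d ha hr
          _ = (2 * a) ^ d * r ^ ((k : ℝ) - d) := by
              rw [rpow_sub hr0, rpow_natCast, rpow_natCast]
              ring
    _ = (2 * a) ^ (k + 1) / (d - (k + 1)) := by
        have hpow : (2 * a) ^ ((k : ℝ) - d + 1) = (2 * a) ^ (k + 1) / (2 * a) ^ d := by
          rw [← rpow_natCast, ← rpow_natCast, ← rpow_sub hc]
          push_cast
          ring_nf
        have hne : (d : ℝ) - (k + 1) ≠ 0 := by linarith
        have hne' : (k : ℝ) - d + 1 ≠ 0 := by linarith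
        rw [integral_const_mul, integral_Ioi_rpow_of_lt hexp hc, hpow]
        field_simp
        ring

lemma radialMoment_expWeight_le {a : ℝ} (ha : 8 ≤ a) {d k : ℕ} (hdk : k + 1 < d) :
    radialMoment (expWeight a d) (d + k) ≤
      a ^ (k + 1) / (d + k + 1) + ((2 * a) ^ (k + 1) - a ^ (k + 1)) / (k + 1) +
        (2 * a) ^ (k + 1) / (d - (k + 1)) := by
  have ha0 : 0 < a := by linarith
  have hint := integrableOn_pow_mul_expWeight (s := d) ha0
    (by exact_mod_cast (k.succ_pos.trans hdk)) (d + k)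
  have hsplit : Set.Ioi (0 : ℝ) = Set.Ioc 0 a ∪ Set.Ioc a (2 * a) ∪ Set.Ioi (2 * a) := by
    rw [Set.Ioc_union_Ioc_eq_Ioc ha0.le (by linarith), Set.Ioc_union_Ioi_eq_Ioi (by linarith)]
  rw [hsplit] at hint
  rw [radialMoment, hsplit, setIntegral_union _ measurableSet_Ioi hint.left_of_union
    hint.right_of_union, setIntegral_union (Set.Ioc_disjoint_Ioc_of_le le_rfl) measurableSet_Ioc
    hint.left_of_union.left_of_union hint.left_of_union.right_of_union,
    setIntegral_Ioc_zero_pow_mul_expWeight ha0, setIntegral_Ioc_pow_mul_expWeight ha0]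
  · gcongr
    exact setIntegral_Ioi_pow_mul_expWeight_le ha hdk
  · rw [Set.Ioc_union_Ioc_eq_Ioc ha0.le (by linarith)]
    exact Set.Ioc_disjoint_Ioi le_rfl

/-! ### Moments at the critical inner radius -/

/-- The paper's `a = √(3n/7)`, which solves `∫_a^{2a} r² dr = n * ∫_a^{2a} dr`. -/
noncomputable def innerRadius (n : ℕ) : ℝ :=
  √(3 / 7 * n)

lemma innerRadius_pos {n : ℕ} (hn : 0 < n) : 0 < innerRadius n :=
  sqrt_pos.2 (by positivity)

lemma innerRadius_sq (n : ℕ) : innerRadius n ^ 2 = 3 / 7 * n :=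
  sq_sqrt (by positivity)

lemma innerRadius_pow_three (n : ℕ) : innerRadius n ^ 3 = 3 / 7 * (n * innerRadius n) := by
  rw [pow_succ, innerRadius_sq, mul_assoc]

lemma rpow_five_halves {x : ℝ} (hx : 0 ≤ x) : x ^ ((5 : ℝ) / 2) = x ^ 2 * √x := by
  rw [sqrt_eq_rpow, ← rpow_natCast, ← rpow_add_of_nonneg hx] <;> norm_num

lemma one_le_rpow_mul_log_sq {n : ℕ} (hn : 2 ≤ n) : 1 ≤ (n : ℝ) ^ ((5 : ℝ) / 2) * log n ^ 2 := by
  have hn' : (2 : ℝ) ≤ n := by exact_mod_cast hn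
  have hlog : 1 / 2 ≤ log n := by
    linarith [log_two_gt_d9, log_le_log two_pos hn']
  have hsqrt : 1 ≤ √(n : ℝ) := one_le_sqrt.2 (by linarith)
  calc (1 : ℝ) = 2 ^ 2 * 1 * (1 / 2) ^ 2 := by norm_num
    _ ≤ (n : ℝ) ^ ((5 : ℝ) / 2) * log n ^ 2 := by
        rw [rpow_five_halves n.cast_nonneg]
        gcongr

lemma abs_log_le_of_mem_Ioc_innerRadius {n : ℕ} (hn : 2 ≤ n) {r : ℝ}
    (hr : r ∈ Set.Ioc (innerRadius n) (2 * innerRadius n)) : |log r| ≤ log n := by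
  have hn' : (2 : ℝ) ≤ n := by exact_mod_cast hn
  have ha := innerRadius_pos (n := n) (by omega)
  have hr0 : 0 < r := ha.trans hr.1
  have hlower : (n : ℝ)⁻¹ ≤ innerRadius n := by
    refine le_sqrt_of_sq_le ?_
    calc (n : ℝ)⁻¹ ^ 2 ≤ (2 : ℝ)⁻¹ ^ 2 := by gcongr
      _ ≤ 3 / 7 * (n : ℝ) := by linarith
  have hupper : 2 * innerRadius n ≤ n :=
    le_of_sq_le_sq (by nlinarith [innerRadius_sq n]) (by linarith)
  rw [abs_le, ← log_inv]
  exact ⟨log_le_log (by positivity) (hlower.trans hr.1.le),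
    log_le_log hr0 (hr.2.trans hupper)⟩

lemma one_sub_le_pow_mul_polyWeight_innerRadius {n : ℕ} (hn : 2 ≤ n) {N r : ℝ}
    (hN : (n : ℝ) ^ ((5 : ℝ) / 2) * log n ^ 2 ≤ N)
    (hr : r ∈ Set.Ioc (innerRadius n) (2 * innerRadius n)) :
    1 - 1 / √n ≤ r ^ (n - 1) * polyWeight (innerRadius n) (n - 1 : ℕ) N r := by
  have hlog : 0 < log n := log_pos (by exact_mod_cast hn)
  have herror : ((n - 1 : ℕ) * log r) ^ 2 / N ≤ 1 / √n := by
    calc ((n - 1 : ℕ) * log r) ^ 2 / N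
        = (n - 1 : ℕ) ^ 2 * |log r| ^ 2 / N := by rw [mul_pow, sq_abs]
      _ ≤ n ^ 2 * log n ^ 2 / ((n : ℝ) ^ ((5 : ℝ) / 2) * log n ^ 2) := by
          gcongr
          · exact Nat.sub_le n 1
          · exact abs_log_le_of_mem_Ioc_innerRadius hn hr
      _ = 1 / √n := by
          rw [rpow_five_halves n.cast_nonneg]
          field_simp
  exact (sub_le_sub_left herror 1).trans <| one_sub_le_pow_mul_polyWeight _
    (innerRadius_pos (by omega)) hr ((one_le_rpow_mul_log_sq hn).trans hN)

lemma le_radialMoment_polyWeight_innerRadius {n : ℕ} (hn : 2 ≤ n) {N : ℝ}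
    (hN : (n : ℝ) ^ ((5 : ℝ) / 2) * log n ^ 2 ≤ N) (k : ℕ) :
    (1 - 1 / √n) * (((2 * innerRadius n) ^ (k + 1) - innerRadius n ^ (k + 1)) / (k + 1)) ≤
      radialMoment (polyWeight (innerRadius n) (n - 1 : ℕ) N) (n - 1 + k) := by
  have ha := innerRadius_pos (n := n) (by omega)
  have hN0 : 0 < N := zero_lt_one.trans_le ((one_le_rpow_mul_log_sq hn).trans hN)
  exact mul_le_radialMoment ha.le (by linarith) (polyWeight_nonneg _ _ _)
    (integrableOn_pow_mul_polyWeight ha (Nat.cast_pos.2 (by omega)) hN0 _)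
    fun r hr => one_sub_le_pow_mul_polyWeight_innerRadius hn hN hr

lemma mul_innerRadius_le_radialMoment_polyWeight {n : ℕ} (hn : 2 ≤ n) {N : ℝ}
    (hN : (n : ℝ) ^ ((5 : ℝ) / 2) * log n ^ 2 ≤ N) :
    (1 - 1 / √n) * innerRadius n ≤
      radialMoment (polyWeight (innerRadius n) (n - 1 : ℕ) N) (n - 1) := by
  have h := le_radialMoment_polyWeight_innerRadius hn hN 0
  rwa [zero_add, pow_one, pow_one, two_mul, add_sub_cancel_right, Nat.cast_zero, zero_add, div_one,
    add_zero] at h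

lemma mul_mul_innerRadius_le_radialMoment_polyWeight {n : ℕ} (hn : 2 ≤ n) {N : ℝ}
    (hN : (n : ℝ) ^ ((5 : ℝ) / 2) * log n ^ 2 ≤ N) :
    (1 - 1 / √n) * (n * innerRadius n) ≤
      radialMoment (polyWeight (innerRadius n) (n - 1 : ℕ) N) (n - 1 + 2) := by
  convert le_radialMoment_polyWeight_innerRadius hn hN 2 using 2
  rw [mul_pow, innerRadius_pow_three]
  push_cast
  ring

lemma eight_le_innerRadius {n : ℕ} (hn : 150 ≤ n) : 8 ≤ innerRadius n := by
  have hn' : (150 : ℝ) ≤ n := by exact_mod_cast hn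
  exact le_sqrt_of_sq_le (by linarith)

lemma ten_div_le_one_div_sqrt {x : ℝ} (hx : 100 ≤ x) : 10 / x ≤ 1 / √x := by
  have hsqrt : 10 ≤ √x := le_sqrt_of_sq_le (by linarith)
  calc 10 / x ≤ √x / x := by gcongr
    _ = 1 / √x := sqrt_div_self'

lemma radialMoment_expWeight_le_mul_innerRadius {n : ℕ} (hn : 150 ≤ n) :
    radialMoment (expWeight (innerRadius n) (n - 1 : ℕ)) (n - 1) ≤
      (1 + 1 / √n) * innerRadius n := by
  have hn' : (150 : ℝ) ≤ n := by exact_mod_cast hn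
  have ha := innerRadius_pos (n := n) (by omega)
  have htail : 1 / ((n : ℝ) - 2) ≤ 2 / n := by
    rw [div_le_div_iff₀ (by linarith) (by linarith)]
    linarith
  calc radialMoment (expWeight (innerRadius n) (n - 1 : ℕ)) (n - 1)
      ≤ _ := radialMoment_expWeight_le (eight_le_innerRadius hn) (k := 0) (by omega)
    _ = (1 + (1 / n + 2 * (1 / ((n : ℝ) - 2)))) * innerRadius n := by
        rw [Nat.cast_pred (by omega)]
        push_cast
        ring_nf
    _ ≤ (1 + (1 / n + 2 * (2 / n))) * innerRadius n := by gcongr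
    _ ≤ (1 + 10 / n) * innerRadius n := by
        gcongr
        field_simp
        norm_num
    _ ≤ (1 + 1 / √n) * innerRadius n := by
        gcongr (1 + ?_) * _
        exact ten_div_le_one_div_sqrt (by linarith)

lemma radialMoment_expWeight_le_mul_mul_innerRadius {n : ℕ} (hn : 150 ≤ n) :
    radialMoment (expWeight (innerRadius n) (n - 1 : ℕ)) (n - 1 + 2) ≤
      (1 + 1 / √n) * (n * innerRadius n) := by
  have hn' : (150 : ℝ) ≤ n := by exact_mod_cast hn
  have ha := innerRadius_pos (n := n) (by omega)
  have htail : 1 / ((n : ℝ) - 4) ≤ 2 / n := by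
    rw [div_le_div_iff₀ (by linarith) (by linarith)]
    linarith
  calc radialMoment (expWeight (innerRadius n) (n - 1 : ℕ)) (n - 1 + 2)
      ≤ _ := radialMoment_expWeight_le (eight_le_innerRadius hn) (k := 2) (by omega)
    _ = (1 + 3 / 7 * (1 / (n + 2) + 8 * (1 / ((n : ℝ) - 4)))) * (n * innerRadius n) := by
        rw [Nat.cast_pred (by omega), mul_pow, innerRadius_pow_three]
        push_cast
        ring_nf
    _ ≤ (1 + 3 / 7 * (1 / n + 8 * (2 / n))) * (n * innerRadius n) := by
        gcongr
        linarith
    _ ≤ (1 + 10 / n) * (n * innerRadius n) := by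
        gcongr
        field_simp
        norm_num
    _ ≤ (1 + 1 / √n) * (n * innerRadius n) := by
        gcongr (1 + ?_) * _
        exact ten_div_le_one_div_sqrt (by linarith)

lemma abs_div_sub_one_le {x y A ε : ℝ} (hA : 0 < A) (hε : ε ≤ 1 / 2) (hx : |x - A| ≤ ε * A)
    (hy : |y - A| ≤ ε * A) : |x / y - 1| ≤ 4 * ε := by
  have hyA : A / 2 ≤ y := by nlinarith [(abs_le.1 hy).1]
  have hy0 : 0 < y := by linarith
  rw [div_sub_one hy0.ne', abs_div, abs_of_pos hy0, div_le_iff₀ hy0]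
  have hε0 : 0 ≤ ε := nonneg_of_mul_nonneg_left ((abs_nonneg _).trans hx) hA
  calc |x - y| ≤ |x - A| + |A - y| := abs_sub_le x A y
    _ ≤ ε * A + ε * A := add_le_add hx (abs_sub_comm A y ▸ hy)
    _ = 4 * ε * (A / 2) := by ring
    _ ≤ 4 * ε * y := by gcongr

lemma exists_forall_of_eventually_cofinite {ι α : Type*} [SemilatticeSup α] {p : ι → α → Prop}
    (hp : ∀ i, Monotone (p i)) (hexists : ∀ i, ∃ c, p i c) {c₀ : α}
    (hc₀ : ∀ᶠ i in Filter.cofinite, p i c₀) : ∃ c, ∀ i, p i c := by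
  choose c hc using hexists
  have : Nonempty α := ⟨c₀⟩
  obtain ⟨b, hb⟩ := (Set.Finite.image c hc₀).bddAbove
  refine ⟨b ⊔ c₀, fun i => ?_⟩
  by_cases hi : p i c₀
  · exact hp i le_sup_right hi
  · exact hp i ((hb (Set.mem_image_of_mem c hi)).trans le_sup_left) (hc i)

/-- The one-dimensional content of the theorem in dimension `n`, with constant `C`: passing from
the exponential to the polynomial weight loses a proportion at most `C / √n` of the mass, and the
variance of each coordinate under the polynomial weight is within `C / √n` of `1`. -/
def MomentComparison (n : ℕ) (C : ℝ) : Prop :=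
  ∀ N : ℝ, (n : ℝ) ^ ((5 : ℝ) / 2) * log n ^ 2 ≤ N →
    1 - radialMoment (polyWeight (innerRadius n) (n - 1 : ℕ) N) (n - 1) /
        radialMoment (expWeight (innerRadius n) (n - 1 : ℕ)) (n - 1) ≤ C / √n ∧
      |radialMoment (polyWeight (innerRadius n) (n - 1 : ℕ) N) (n - 1 + 2) /
        (n * radialMoment (polyWeight (innerRadius n) (n - 1 : ℕ) N) (n - 1)) - 1| ≤ C / √n

lemma MomentComparison.monotone (n : ℕ) : Monotone (MomentComparison n) := by
  intro C C' hC h N hN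
  have hle : C / √n ≤ C' / √n := by gcongr
  exact ⟨(h N hN).1.trans hle, (h N hN).2.trans hle⟩

lemma momentComparison_four {n : ℕ} (hn : 150 ≤ n) : MomentComparison n 4 := by
  intro N hN
  have hn2 : 2 ≤ n := by omega
  have hn0 : (0 : ℝ) < n := by positivity
  have ha := innerRadius_pos (n := n) (by omega)
  have hs : (0 : ℝ) < (n - 1 : ℕ) := Nat.cast_pos.2 (by omega)
  have hN0 : 0 < N := zero_lt_one.trans_le ((one_le_rpow_mul_log_sq hn2).trans hN)
  have hhalf : 1 / √n ≤ 1 / 2 := by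
    gcongr
    exact le_sqrt_of_sq_le (by norm_cast; omega)
  have habs {x A : ℝ} (hl : (1 - 1 / √n) * A ≤ x) (hu : x ≤ (1 + 1 / √n) * A) :
      |x - A| ≤ 1 / √n * A := abs_le.2 ⟨by linarith, by linarith⟩
  have hpoly_le := radialMoment_polyWeight_le ha hs hN0
  have hpoly_ge := mul_innerRadius_le_radialMoment_polyWeight hn2 hN
  have hexp_le := radialMoment_expWeight_le_mul_innerRadius hn
  have hpoly := habs hpoly_ge ((hpoly_le _).trans hexp_le)
  have hexp := habs (hpoly_ge.trans (hpoly_le _)) hexp_le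
  have hsecond := habs (mul_mul_innerRadius_le_radialMoment_polyWeight hn2 hN)
    ((hpoly_le _).trans (radialMoment_expWeight_le_mul_mul_innerRadius hn))
  rw [← mul_one_div (4 : ℝ)]
  refine ⟨(le_abs_self _).trans ?_, abs_div_sub_one_le (by positivity) hhalf hsecond ?_⟩
  · rw [abs_sub_comm]
    exact abs_div_sub_one_le ha hhalf hpoly hexp
  · rw [← mul_sub, abs_mul, abs_of_pos hn0, mul_left_comm]
    gcongr

lemma exists_momentComparison {n : ℕ} (hn : 2 ≤ n) : ∃ C, MomentComparison n C := by
  set a := innerRadius n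
  set J := radialMoment (expWeight a (n - 1 : ℕ)) (n - 1 + 2)
  set c := (1 - 1 / √n) * a
  have hn0 : (0 : ℝ) < n := by positivity
  have ha : 0 < a := innerRadius_pos (by omega)
  have hs : (0 : ℝ) < (n - 1 : ℕ) := Nat.cast_pos.2 (by omega)
  have hc : 0 < c := mul_pos (sub_pos.2 (by
    rw [div_lt_one (by positivity), lt_sqrt zero_le_one]
    exact_mod_cast hn)) ha
  have hJ : 0 ≤ J := radialMoment_nonneg (expWeight_nonneg _ _) _
  refine ⟨√n * (1 + J / (n * c)), fun N hN => ?_⟩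
  have hN0 : 0 < N := zero_lt_one.trans_le ((one_le_rpow_mul_log_sq hn).trans hN)
  have hcQ := mul_innerRadius_le_radialMoment_polyWeight hn hN
  have hnonneg := radialMoment_nonneg (polyWeight_nonneg a (n - 1 : ℕ) N)
  have hratio : radialMoment (polyWeight a (n - 1 : ℕ) N) (n - 1 + 2) /
      (n * radialMoment (polyWeight a (n - 1 : ℕ) N) (n - 1)) ≤ J / (n * c) := by
    gcongr
    exact radialMoment_polyWeight_le ha hs hN0 _
  have hJc : 0 ≤ J / (n * c) := by positivity
  have hmass := div_nonneg (hnonneg (n - 1))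
    (radialMoment_nonneg (expWeight_nonneg a (n - 1 : ℕ)) (n - 1))
  have hvariance := div_nonneg (hnonneg (n - 1 + 2)) (mul_nonneg hn0.le (hnonneg (n - 1)))
  rw [mul_div_cancel_left₀ _ (by positivity)]
  exact ⟨by linarith, abs_le.2 ⟨by linarith, by linarith⟩⟩

lemma exists_forall_momentComparison : ∃ C, 0 < C ∧ ∀ n, 2 ≤ n → MomentComparison n C := by
  obtain ⟨C, hC⟩ := exists_forall_of_eventually_cofinite
    (p := fun n c => 2 ≤ n → MomentComparison n c)
    (fun n c c' hcc' h hn => MomentComparison.monotone n hcc' (h hn))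
    (fun n => by
      by_cases hn : 2 ≤ n
      · exact (exists_momentComparison hn).imp fun c hc _ => hc
      · exact ⟨0, fun h => absurd h hn⟩)
    (c₀ := 4) <| by
      rw [Nat.cofinite_eq_atTop]
      filter_upwards [Filter.eventually_ge_atTop 150] with n hn _
      exact momentComparison_four hn
  exact ⟨max C 1, by positivity, fun n hn =>
    MomentComparison.monotone n (le_max_left _ _) (hC n hn)⟩

lemma not_hasRadialDensity_expWeight_zero {ι : Type*} [Fintype ι] [Nonempty ι] (a : ℝ)
    (μ : Measure (ι → ℝ)) : ¬ HasRadialDensity (expWeight a 0) μ := fun hμ =>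
  not_integrableOn_Ioi_rpow (Fintype.card ι - 1 : ℕ) <| by
    simpa only [expWeight, neg_zero, zero_mul, exp_zero, mul_one, rpow_natCast]
      using hμ.integrableOn

/-- Comparison of the density `e^{-(n-1)f(|x|)}` with its polynomial approximation
`(1 - (n-1)f(|x|)/N)₊^N` for `N ≥ n^{5/2} log²n`: the approximating measure is
essentially isotropic (with error `C/√n`), and the distributions of the norms are
within `C/√n` of each other. -/
theorem polynomial_approximation_radial :
    ∃ C : ℝ, 0 < C ∧
      ∀ n : ℕ, 1 ≤ n →
        ∀ N : ℝ, (n : ℝ) ^ ((5 : ℝ) / 2) * (Real.log n) ^ 2 ≤ N →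
          ∀ (Cn Cn' : ℝ) (μ μt : Measure (Fin n → ℝ)),
            μ = (volume : Measure (Fin n → ℝ)).withDensity
              (fun x => ENNReal.ofReal (Cn * Real.exp (-((n : ℝ) - 1) *
                radialF (Real.sqrt (3 / 7 * n)) (Real.sqrt (∑ i, (x i) ^ 2))))) →
            μt = (volume : Measure (Fin n → ℝ)).withDensity
              (fun x => ENNReal.ofReal (Cn' *
                (max (1 - ((n : ℝ) - 1) *
                  radialF (Real.sqrt (3 / 7 * n)) (Real.sqrt (∑ i, (x i) ^ 2)) / N) 0) ^ N)) →
            IsProbabilityMeasure μ →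
            IsProbabilityMeasure μt →
            (∃ ε : ℝ, |ε| ≤ C / Real.sqrt n ∧
                ∀ i j, ∫ x, x i * x j ∂μt = (1 + ε) * (if i = j then 1 else 0)) ∧
              ∀ t : ℝ,
                |(μ {x | Real.sqrt (∑ i, (x i) ^ 2) ≤ t}).toReal -
                    (μt {x | Real.sqrt (∑ i, (x i) ^ 2) ≤ t}).toReal| ≤
                  C / Real.sqrt n := by
  obtain ⟨C, hC, hmoments⟩ := exists_forall_momentComparison
  refine ⟨C, hC, fun n hn N hN c c' μ ν hμ hν hμ_prob hν_prob => ?_⟩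
  have : Nonempty (Fin n) := ⟨⟨0, hn⟩⟩
  rw [← Nat.cast_pred hn] at hμ hν
  have hμ' : HasRadialDensity (expWeight (innerRadius n) (n - 1 : ℕ)) μ :=
    ⟨by fun_prop, expWeight_nonneg _ _, hμ_prob, c, hμ⟩
  have hν' : HasRadialDensity (polyWeight (innerRadius n) (n - 1 : ℕ) N) ν :=
    ⟨by fun_prop, polyWeight_nonneg _ _ _, hν_prob, c', hν⟩
  have hn2 : 2 ≤ n := by
    by_contra! h
    obtain rfl : n = 1 := by omega
    exact not_hasRadialDensity_expWeight_zero _ _ (by simpa using hμ')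
  have hN0 : 0 < N := zero_lt_one.trans_le ((one_le_rpow_mul_log_sq hn2).trans hN)
  have hint := integrableOn_pow_mul_polyWeight (innerRadius_pos hn)
    (s := (n - 1 : ℕ)) (Nat.cast_pos.2 (by omega)) hN0 (n - 1 + 2)
  refine ⟨⟨_, (hmoments n hn2 N hN).2, fun i j => ?_⟩, fun t => ?_⟩
  · simpa using hν'.integral_mul (by simpa using hint) i j
  · have hdist := hμ'.abs_measure_euclideanNorm_le_sub_le hν'
      (fun r => polyWeight_le_expWeight _ _ r hN0) t
    rw [Fintype.card_fin] at hdist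
    exact hdist.trans (hmoments n hn2 N hN).1
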